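/- arXiv:2410.23871 — 9 statements merged into one kernel-verified Lean document; each statement's English description precedes it below -/
import Mathlib

section
/- Let X and Y be real Banach spaces, let F : X → Set Y be a set-valued mapping and let (x̄, ȳ) satisfy ȳ ∈ F x̄. Assume there are κ > 0 and α > 0 such that for every x ∈ closedBall(x̄, α) and every v ∈ F x one has ‖x − x̄‖ ≤ κ‖ȳ − v‖. Let μ > 0 satisfy κμ < 1 and let κ' > κ/(1 − κμ). Then for every β ∈ (0, α], every z̄ ∈ Y, and every set-valued mapping G : X → Set Y satisfying G x̄ = {z̄} and G x ⊆ {z̄ + w : ‖w‖ ≤ μ‖x − x̄‖} for every x ∈ closedBall(x̄, β), the mapping G + F is strongly metrically subregular at (x̄, ȳ + z̄) with constant κ' and neighborhood closedBall(x̄, β); that is, for every x ∈ closedBall(x̄, β) and every v ∈ (G + F)(x) one has ‖x − x̄‖ ≤ κ'‖(ȳ + z̄) − v‖. -/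
open Metric

/-- Stability of strong metric subregularity at the reference point under set-valued
perturbation (Proposition 4.2 / `propStability`). -/
theorem stmt_1 {X Y : Type*} [NormedAddCommGroup X] [NormedSpace ℝ X] [CompleteSpace X]
    [NormedAddCommGroup Y] [NormedSpace ℝ Y] [CompleteSpace Y]
    (F : X → Set Y) (xb : X) (yb : Y) (hxy : yb ∈ F xb)
    (κ α : ℝ) (hκ : 0 < κ) (hα : 0 < α)
    (hsub : ∀ x ∈ closedBall xb α, ∀ v ∈ F x, ‖x - xb‖ ≤ κ * ‖yb - v‖)
    (μ : ℝ) (hμ : 0 < μ) (hκμ : κ * μ < 1)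
    (κ' : ℝ) (hκ' : κ / (1 - κ * μ) < κ') :
    ∀ β, 0 < β → β ≤ α → ∀ zb : Y, ∀ G : X → Set Y,
      G xb = {zb} →
      (∀ x ∈ closedBall xb β, G x ⊆ {z | ∃ w : Y, ‖w‖ ≤ μ * ‖x - xb‖ ∧ z = zb + w}) →
      ∀ x ∈ closedBall xb β, ∀ w ∈ G x, ∀ v ∈ F x,
        ‖x - xb‖ ≤ κ' * ‖(yb + zb) - (w + v)‖ := by
  intro β hβ hβα zb G hG hGx x hx w hw v hv
  obtain ⟨u, hu, rfl⟩ := hGx x hx hw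
  have h1 := hsub x (closedBall_subset_closedBall hβα hx) v hv
  have h2 : ‖yb - v‖ ≤ ‖(yb + zb) - (zb + u + v)‖ + ‖u‖ := by
    have h : yb - v = ((yb + zb) - (zb + u + v)) + u := by abel
    calc ‖yb - v‖ = ‖((yb + zb) - (zb + u + v)) + u‖ := by rw [← h]
      _ ≤ _ := norm_add_le _ _
  have hpos : 0 < 1 - κ * μ := by linarith
  have h3 : ‖x - xb‖ ≤ κ * (‖(yb + zb) - (zb + u + v)‖ + μ * ‖x - xb‖) :=
    h1.trans (mul_le_mul_of_nonneg_left (by linarith) hκ.le)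
  have h4 : ‖x - xb‖ ≤ κ / (1 - κ * μ) * ‖(yb + zb) - (zb + u + v)‖ := by
    rw [div_mul_eq_mul_div, le_div_iff₀ hpos]
    linarith
  exact h4.trans (mul_le_mul_of_nonneg_right hκ'.le (norm_nonneg _))
end

section
/- Let P be a metric space, let X and Y be real Banach spaces, and let Ω ⊆ P × X be a compact set. Let F : X → Set Y be a set-valued mapping and let f : P × X → Y be continuous. For t ∈ P write G_t(x) := {f(t, x) + v : v ∈ F x}. Assume: (i) for each (t, x̄) ∈ Ω there exist a > 0, b > 0, κ > 0 such that for every (x, y) with y ∈ G_t(x), x ∈ closedBall(x̄, a), y ∈ closedBall(0, b), there exists r > 0 such that for every u ∈ closedBall(x, r) and every v ∈ G_t(u) with v ∈ closedBall(0, b) one has ‖u − x‖ ≤ κ‖y − v‖; (ii) for each (t, x̄) ∈ Ω and each μ > 0 there is α > 0 such that ‖f(s, u) − f(t, u) − (f(s, x) − f(t, x))‖ ≤ μ‖x − u‖ for all x, u ∈ closedBall(x̄, α) and all s ∈ closedBall(t, α). Then there exist positive constants a, b, κ such that for every (t, x̄) ∈ Ω and every (x, y) with y ∈ G_t(x), x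 ∈ closedBall(x̄, a), y ∈ closedBall(0, b), there exists r > 0 such that for every u ∈ closedBall(x, r) and every v ∈ G_t(u) with v ∈ closedBall(0, b) one has ‖u − x‖ ≤ κ‖y − v‖. -/
open Metric

/-- Uniform strong metric subregularity around the reference points over a compact set
(Theorem 4.3 (iii) / `thmParametricStabilitySubregularity`). -/
theorem stmt_2 {P : Type*} [MetricSpace P]
    {X Y : Type*} [NormedAddCommGroup X] [NormedSpace ℝ X] [CompleteSpace X]
    [NormedAddCommGroup Y] [NormedSpace ℝ Y] [CompleteSpace Y]
    (Ω : Set (P × X)) (hΩ : IsCompact Ω)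
    (F : X → Set Y) (f : P × X → Y) (hf : Continuous f)
    (G : P → X → Set Y)
    (hG : ∀ t x, G t x = {z | ∃ v ∈ F x, z = f (t, x) + v})
    (hi : ∀ p ∈ Ω, ∃ a > 0, ∃ b > 0, ∃ κ > 0,
      ∀ x ∈ closedBall p.2 a, ∀ y ∈ G p.1 x, y ∈ closedBall (0 : Y) b →
        ∃ r > 0, ∀ u ∈ closedBall x r, ∀ v ∈ G p.1 u, v ∈ closedBall (0 : Y) b →
          ‖u - x‖ ≤ κ * ‖y - v‖)
    (hii : ∀ p ∈ Ω, ∀ μ > 0, ∃ α > 0, ∀ x ∈ closedBall p.2 α, ∀ u ∈ closedBall p.2 α,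
      ∀ s ∈ closedBall p.1 α,
        ‖f (s, u) - f (p.1, u) - (f (s, x) - f (p.1, x))‖ ≤ μ * ‖x - u‖) :
    ∃ a > 0, ∃ b > 0, ∃ κ > 0, ∀ p ∈ Ω,
      ∀ x ∈ closedBall p.2 a, ∀ y ∈ G p.1 x, y ∈ closedBall (0 : Y) b →
        ∃ r > 0, ∀ u ∈ closedBall x r, ∀ v ∈ G p.1 u, v ∈ closedBall (0 : Y) b →
          ‖u - x‖ ≤ κ * ‖y - v‖ := by
  have key : ∃ a > 0, ∃ b > 0, ∃ κ > 0, ∀ p ∈ Ω, p ∈ Ω →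
      ∀ x ∈ closedBall p.2 a, ∀ y ∈ G p.1 x, y ∈ closedBall (0 : Y) b →
        ∃ r > 0, ∀ u ∈ closedBall x r, ∀ v ∈ G p.1 u, v ∈ closedBall (0 : Y) b →
          ‖u - x‖ ≤ κ * ‖y - v‖ := by
    refine hΩ.induction_on (p := fun S => ∃ a > 0, ∃ b > 0, ∃ κ > 0, ∀ p ∈ S, p ∈ Ω →
      ∀ x ∈ closedBall p.2 a, ∀ y ∈ G p.1 x, y ∈ closedBall (0 : Y) b →
        ∃ r > 0, ∀ u ∈ closedBall x r, ∀ v ∈ G p.1 u, v ∈ closedBall (0 : Y) b →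
          ‖u - x‖ ≤ κ * ‖y - v‖) ?_ ?_ ?_ ?_
    · exact ⟨1, one_pos, 1, one_pos, 1, one_pos, by simp⟩
    · rintro S T hST ⟨a, ha, b, hb, κ, hκ, h⟩
      exact ⟨a, ha, b, hb, κ, hκ, fun p hp => h p (hST hp)⟩
    · rintro S T ⟨a, ha, b, hb, κ, hκ, h⟩ ⟨a', ha', b', hb', κ', hκ', h'⟩
      refine ⟨min a a', lt_min ha ha', min b b', lt_min hb hb', max κ κ',
        lt_max_of_lt_left hκ, ?_⟩
      rintro p (hp | hp) hpΩ x hx y hy hyb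
      · obtain ⟨r, hr, H⟩ := h p hp hpΩ x (closedBall_subset_closedBall (min_le_left _ _) hx) y hy
          (closedBall_subset_closedBall (min_le_left _ _) hyb)
        refine ⟨r, hr, fun u hu v hv hvb => (H u hu v hv
          (closedBall_subset_closedBall (min_le_left _ _) hvb)).trans ?_⟩
        exact mul_le_mul_of_nonneg_right (le_max_left _ _) (norm_nonneg _)
      · obtain ⟨r, hr, H⟩ := h' p hp hpΩ x (closedBall_subset_closedBall (min_le_right _ _) hx) y hy
          (closedBall_subset_closedBall (min_le_right _ _) hyb)
        refine ⟨r, hr, fun u hu v hv hvb => (H u hu v hv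
          (closedBall_subset_closedBall (min_le_right _ _) hvb)).trans ?_⟩
        exact mul_le_mul_of_nonneg_right (le_max_right _ _) (norm_nonneg _)
    · rintro ⟨t, z⟩ hp
      obtain ⟨a, ha, b, hb, κ, hκ, h⟩ := hi _ hp
      obtain ⟨α, hα, h2⟩ := hii _ hp (1 / (2 * κ)) (by positivity)
      obtain ⟨ε, hε, hc⟩ := Metric.continuous_iff.1 hf (t, z) (b / 4) (by positivity)
      simp only at h h2
      obtain ⟨d, hd, hda, hdα, hdε⟩ : ∃ d > 0, 4 * d ≤ a ∧ 4 * d ≤ α ∧ 4 * d ≤ ε := by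
        refine ⟨min a (min α ε) / 4, by positivity, ?_, ?_, ?_⟩
        · linarith [min_le_left a (min α ε)]
        · linarith [min_le_right a (min α ε), min_le_left α ε]
        · linarith [min_le_right a (min α ε), min_le_right α ε]
      refine ⟨ball (t, z) d, mem_nhdsWithin_of_mem_nhds (ball_mem_nhds _ hd), d, hd, b / 2,
        by positivity, 2 * κ, by positivity, ?_⟩
      rintro ⟨s, z'⟩ hq - x hx y hy hyb
      simp only [mem_ball, Prod.dist_eq, max_lt_iff] at hq
      obtain ⟨hq1, hq2⟩ := hq
      simp only [mem_closedBall] at hx hy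
      -- the perturbation is small near the reference point
      have small : ∀ w, dist w z < 4 * d → ‖f (s, w) - f (t, w)‖ ≤ b / 2 := by
        intro w hw
        have e1 := hc (s, w) (by
          rw [Prod.dist_eq]; exact max_lt (by simp only; linarith) (by simp only; linarith))
        have e2 := hc (t, w) (by
          rw [Prod.dist_eq]; exact max_lt (by simp only [dist_self]; linarith) (by simp only; linarith))
        rw [← dist_eq_norm]
        linarith [dist_triangle_right (f (s, w)) (f (t, w)) (f (t, z))]
      have shift : ∀ w, dist w z < 4 * d → ∀ y ∈ G s w, y ∈ closedBall (0 : Y) (b / 2) →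
          y - (f (s, w) - f (t, w)) ∈ G t w ∧
          y - (f (s, w) - f (t, w)) ∈ closedBall (0 : Y) b := by
        intro w hw y hy hyb
        rw [hG] at hy ⊢
        obtain ⟨v, hv, rfl⟩ := hy
        refine ⟨⟨v, hv, by abel⟩, ?_⟩
        rw [mem_closedBall_zero_iff] at hyb ⊢
        linarith [norm_sub_le (f (s, w) + v) (f (s, w) - f (t, w)), small w hw]
      have hxz : dist x z < 2 * d := by linarith [dist_triangle x z' z]
      obtain ⟨hy1, hy2⟩ := shift x (by linarith) y hy hyb
      obtain ⟨r, hr, H⟩ := h x (mem_closedBall.2 (by linarith)) _ hy1 hy2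
      refine ⟨min r d, lt_min hr hd, fun u hu v hv hvb => ?_⟩
      have hur : u ∈ closedBall x r := closedBall_subset_closedBall (min_le_left _ _) hu
      have hud : dist u x ≤ d := (mem_closedBall.1 hu).trans (min_le_right _ _)
      have huz : dist u z < 3 * d := by linarith [dist_triangle u x z]
      obtain ⟨hv1, hv2⟩ := shift u (by linarith) v hv hvb
      have K := H u hur _ hv1 hv2
      have L := h2 x (mem_closedBall.2 (by linarith)) u (mem_closedBall.2 (by linarith)) s
        (mem_closedBall.2 (by linarith))
      have e : y - (f (s, x) - f (t, x)) - (v - (f (s, u) - f (t, u))) =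
          (y - v) + (f (s, u) - f (t, u) - (f (s, x) - f (t, x))) := by abel
      rw [e] at K
      have M := K.trans (mul_le_mul_of_nonneg_left ((norm_add_le _ _).trans
        (add_le_add_right L _)) hκ.le)
      rw [norm_sub_rev x u] at M
      have e3 : κ * (‖y - v‖ + 1 / (2 * κ) * ‖u - x‖) = κ * ‖y - v‖ + ‖u - x‖ / 2 := by
        field_simp
      rw [e3] at M
      linarith
  obtain ⟨a, ha, b, hb, κ, hκ, h⟩ := key
  exact ⟨a, ha, b, hb, κ, hκ, fun p hp => h p hp hp⟩
end

section
/- Let T > 0, let X and Y be real Banach spaces, let F : X → Set Y be a set-valued mapping, let f : ℝ × X → Y be continuous, and let φ : [0, T] → X and p : [0, T] → Y be continuous mappings. For t ∈ [0, T] write G_t(x) := {f(t, x) + v : v ∈ F x}. Assume: (i) for each t ∈ [0, T] there exist a > 0, b > 0, κ > 0 such that for every (x, y) with y ∈ G_t(x), x ∈ closedBall(φ(t), a), y ∈ closedBall(p(t), b), there exists r > 0 such that for every u ∈ closedBall(x, r) and every v ∈ G_t(u) with v ∈ closedBall(p(t), b) one has ‖u − x‖ ≤ κ‖y − v‖; (ii)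 for each t ∈ [0, T] and each μ > 0 there is δ > 0 such that ‖f(s, u) − f(t, u) − (f(s, x) − f(t, x))‖ ≤ μ‖x − u‖ for all x, u ∈ closedBall(φ(t), δ) and all s ∈ [0, T] with |s − t| < δ. Then there exist positive constants a, b, κ such that for every t ∈ [0, T] and every (x, y) with y ∈ G_t(x), x ∈ closedBall(φ(t), a), y ∈ closedBall(p(t), b), there exists r > 0 such that for every u ∈ closedBall(x, r) and every v ∈ G_t(u) with v ∈ closedBall(p(t), b) one has ‖u − x‖ ≤ κ‖y − v‖. -/
open Metric

/-- Uniform strong metric subregularity around the points of a continuous path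
(Theorem 4.5 (iii) / `thmStabilitySubreg`). -/
theorem stmt_5 {X Y : Type*} [NormedAddCommGroup X] [NormedSpace ℝ X] [CompleteSpace X]
    [NormedAddCommGroup Y] [NormedSpace ℝ Y] [CompleteSpace Y]
    (T : ℝ) (hT : 0 < T)
    (F : X → Set Y) (f : ℝ × X → Y) (hf : Continuous f)
    (φ : ℝ → X) (hφ : ContinuousOn φ (Set.Icc 0 T))
    (p : ℝ → Y) (hp : ContinuousOn p (Set.Icc 0 T))
    (G : ℝ → X → Set Y)
    (hG : ∀ t x, G t x = {z | ∃ v ∈ F x, z = f (t, x) + v})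
    (hi : ∀ t ∈ Set.Icc (0 : ℝ) T, ∃ a > 0, ∃ b > 0, ∃ κ > 0,
      ∀ x ∈ closedBall (φ t) a, ∀ y ∈ G t x, y ∈ closedBall (p t) b →
        ∃ r > 0, ∀ u ∈ closedBall x r, ∀ v ∈ G t u, v ∈ closedBall (p t) b →
          ‖u - x‖ ≤ κ * ‖y - v‖)
    (hii : ∀ t ∈ Set.Icc (0 : ℝ) T, ∀ μ > 0, ∃ δ > 0,
      ∀ x ∈ closedBall (φ t) δ, ∀ u ∈ closedBall (φ t) δ,
        ∀ s ∈ Set.Icc (0 : ℝ) T, |s - t| < δ →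
          ‖f (s, u) - f (t, u) - (f (s, x) - f (t, x))‖ ≤ μ * ‖x - u‖) :
    ∃ a > 0, ∃ b > 0, ∃ κ > 0, ∀ t ∈ Set.Icc (0 : ℝ) T,
      ∀ x ∈ closedBall (φ t) a, ∀ y ∈ G t x, y ∈ closedBall (p t) b →
        ∃ r > 0, ∀ u ∈ closedBall x r, ∀ v ∈ G t u, v ∈ closedBall (p t) b →
          ‖u - x‖ ≤ κ * ‖y - v‖ := by
  have key : ∃ a > 0, ∃ b > 0, ∃ κ > 0, ∀ t ∈ Set.Icc (0 : ℝ) T, t ∈ Set.Icc (0 : ℝ) T →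
      ∀ x ∈ closedBall (φ t) a, ∀ y ∈ G t x, y ∈ closedBall (p t) b →
        ∃ r > 0, ∀ u ∈ closedBall x r, ∀ v ∈ G t u, v ∈ closedBall (p t) b →
          ‖u - x‖ ≤ κ * ‖y - v‖ := by
    refine (isCompact_Icc (a := (0 : ℝ)) (b := T)).induction_on
      (p := fun S => ∃ a > 0, ∃ b > 0, ∃ κ > 0, ∀ t ∈ S, t ∈ Set.Icc (0 : ℝ) T →
      ∀ x ∈ closedBall (φ t) a, ∀ y ∈ G t x, y ∈ closedBall (p t) b →
        ∃ r > 0, ∀ u ∈ closedBall x r, ∀ v ∈ G t u, v ∈ closedBall (p t) b →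
          ‖u - x‖ ≤ κ * ‖y - v‖) ?_ ?_ ?_ ?_
    · exact ⟨1, one_pos, 1, one_pos, 1, one_pos, fun t ht => absurd ht (Set.notMem_empty t)⟩
    · rintro S S' hSS ⟨a, ha, b, hb, κ, hκ, h⟩
      exact ⟨a, ha, b, hb, κ, hκ, fun t ht => h t (hSS ht)⟩
    · rintro S S' ⟨a, ha, b, hb, κ, hκ, h⟩ ⟨a', ha', b', hb', κ', hκ', h'⟩
      refine ⟨min a a', lt_min ha ha', min b b', lt_min hb hb', max κ κ', lt_max_of_lt_left hκ, ?_⟩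
      rintro t (ht | ht) htI x hx y hy hyb
      · obtain ⟨r, hr, H⟩ := h t ht htI x (closedBall_subset_closedBall (min_le_left _ _) hx) y hy
          (closedBall_subset_closedBall (min_le_left _ _) hyb)
        refine ⟨r, hr, fun u hu v hv hvb => (H u hu v hv
          (closedBall_subset_closedBall (min_le_left _ _) hvb)).trans ?_⟩
        gcongr
        exact le_max_left _ _
      · obtain ⟨r, hr, H⟩ := h' t ht htI x (closedBall_subset_closedBall (min_le_right _ _) hx) y hy
          (closedBall_subset_closedBall (min_le_right _ _) hyb)
        refine ⟨r, hr, fun u hu v hv hvb => (H u hu v hv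
          (closedBall_subset_closedBall (min_le_right _ _) hvb)).trans ?_⟩
        gcongr
        exact le_max_right _ _
    · intro t ht
      obtain ⟨a₀, ha₀, b₀, hb₀, κ, hκ, H⟩ := hi t ht
      obtain ⟨δ, hδ, hfδ⟩ := hii t ht (1 / (2 * κ)) (by positivity)
      obtain ⟨a, ha, haa, haδ, hab⟩ : ∃ a > 0, 3 * a ≤ a₀ ∧ 3 * a ≤ δ ∧
          1 / (2 * κ) * (3 * a) ≤ b₀ / 4 := by
        refine ⟨min (min (a₀ / 3) (δ / 3)) (b₀ * κ / 6), by positivity, ?_, ?_, ?_⟩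
        · have := (min_le_left (min (a₀ / 3) (δ / 3)) (b₀ * κ / 6)).trans (min_le_left _ _)
          linarith
        · have := (min_le_left (min (a₀ / 3) (δ / 3)) (b₀ * κ / 6)).trans (min_le_right _ _)
          linarith
        · calc _ ≤ 1 / (2 * κ) * (3 * (b₀ * κ / 6)) := by
                gcongr
                exact min_le_right _ _
            _ = b₀ / 4 := by field_simp; norm_num
      have e1 : ∀ᶠ s in nhdsWithin t (Set.Icc 0 T), dist (φ s) (φ t) < a :=
        (hφ t ht).eventually (ball_mem_nhds _ ha)
      have e2 : ∀ᶠ s in nhdsWithin t (Set.Icc 0 T), dist (p s) (p t) < b₀ / 4 :=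
        (hp t ht).eventually (ball_mem_nhds _ (by positivity))
      have hc : Continuous fun s : ℝ => f (s, φ t) := by fun_prop
      have e3 : ∀ᶠ s in nhdsWithin t (Set.Icc 0 T), dist (f (s, φ t)) (f (t, φ t)) < b₀ / 4 :=
        (hc.continuousWithinAt (s := Set.Icc 0 T) (x := t)).eventually
          (ball_mem_nhds _ (by positivity))
      have e4 : ∀ᶠ s in nhdsWithin t (Set.Icc 0 T), dist s t < δ :=
        mem_nhdsWithin_of_mem_nhds (ball_mem_nhds _ hδ)
      refine ⟨_, (e1.and (e2.and (e3.and e4))), a, ha, b₀ / 4, by positivity, 2 * κ,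
        by positivity, ?_⟩
      rintro s ⟨h1, h2, h3, h4⟩ hs x hx y hy hyb
      rw [Real.dist_eq] at h4
      have tr : ∀ z ∈ closedBall (φ t) (3 * a), ∀ w ∈ G s z, w ∈ closedBall (p s) (b₀ / 4) →
          w - (f (s, z) - f (t, z)) ∈ G t z ∧
          w - (f (s, z) - f (t, z)) ∈ closedBall (p t) b₀ := by
        intro z hz w hw hwb
        constructor
        · rw [hG] at hw ⊢
          obtain ⟨q, hq, rfl⟩ := hw
          exact ⟨q, hq, by abel⟩
        · have h5 := hfδ (φ t) (mem_closedBall_self hδ.le) z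
            (closedBall_subset_closedBall haδ hz) s hs h4
          have h6 : ‖φ t - z‖ ≤ 3 * a := by rw [← dist_eq_norm, dist_comm]; exact hz
          have h7 : 1 / (2 * κ) * ‖φ t - z‖ ≤ 1 / (2 * κ) * (3 * a) := by gcongr
          rw [mem_closedBall, dist_eq_norm] at hwb ⊢
          rw [dist_eq_norm] at h2 h3
          have h8 : w - (f (s, z) - f (t, z)) - p t = (w - p s) + (p s - p t)
            - (f (s, z) - f (t, z) - (f (s, φ t) - f (t, φ t))) - (f (s, φ t) - f (t, φ t)) := by
            abel
          rw [h8]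
          refine (norm_sub_le _ _).trans ?_
          have h9 := norm_sub_le ((w - p s) + (p s - p t))
            (f (s, z) - f (t, z) - (f (s, φ t) - f (t, φ t)))
          have h10 := norm_add_le (w - p s) (p s - p t)
          linarith
      have hx3 : x ∈ closedBall (φ t) (3 * a) := by
        rw [mem_closedBall] at hx ⊢
        linarith [dist_triangle x (φ s) (φ t)]
      obtain ⟨y1, y2⟩ := tr x hx3 y hy hyb
      obtain ⟨r, hr, Hr⟩ := H x (closedBall_subset_closedBall haa hx3) _ y1 y2
      refine ⟨min r a, lt_min hr ha, fun u hu v hv hvb => ?_⟩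
      have hu3 : u ∈ closedBall (φ t) (3 * a) := by
        have hu' := closedBall_subset_closedBall (min_le_right _ _) hu
        rw [mem_closedBall] at hx hu' ⊢
        linarith [dist_triangle x (φ s) (φ t), dist_triangle u x (φ t)]
      obtain ⟨v1, v2⟩ := tr u hu3 v hv hvb
      have h11 := Hr u (closedBall_subset_closedBall (min_le_left _ _) hu) _ v1 v2
      have h12 := hfδ x (closedBall_subset_closedBall haδ hx3) u
        (closedBall_subset_closedBall haδ hu3) s hs h4
      have h13 : y - (f (s, x) - f (t, x)) - (v - (f (s, u) - f (t, u))) =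
        (y - v) + (f (s, u) - f (t, u) - (f (s, x) - f (t, x))) := by abel
      rw [h13] at h11
      have h14 := norm_add_le (y - v) (f (s, u) - f (t, u) - (f (s, x) - f (t, x)))
      rw [norm_sub_rev x u] at h12
      have h15 : ‖u - x‖ ≤ κ * (‖y - v‖ + 1 / (2 * κ) * ‖u - x‖) :=
        h11.trans (by gcongr; linarith)
      have h16 : κ * (‖y - v‖ + 1 / (2 * κ) * ‖u - x‖) = κ * ‖y - v‖ + ‖u - x‖ / 2 := by
        field_simp
      linarith
  obtain ⟨a, ha, b, hb, κ, hκ, h⟩ := key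
  exact ⟨a, ha, b, hb, κ, hκ, fun t ht => h t ht ht⟩
end

section
/- Let n be a natural number, let f : EuclideanSpace ℝ (Fin n) → EuclideanSpace ℝ (Fin n), let x̄ be a point, and let ε > 0 and δ > 0 be constants. Assume f is differentiable at every point of closedBall(x̄, δ) and that for each x ∈ closedBall(x̄, δ) one has ‖f x − f x̄ − (Df x)(x − x̄)‖ ≤ ε‖x − x̄‖, where Df x denotes the Fréchet derivative of f at x. Then for each x ∈ closedBall(x̄, δ) and each y* ∈ EuclideanSpace ℝ (Fin n), setting x* := (Df x)† y* (the Hilbert-space adjoint of Df x applied to y*), one has |⟨x*, x − x̄⟩ − ⟨y*, f x − f x̄⟩| ≤ ε · max{‖x*‖, ‖y*‖} · max{‖x − x̄‖, ‖f x − f x̄‖}. -/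
open Metric
open scoped RealInnerProductSpace

/-- Semismooth*-type estimate for a differentiable single-valued map
(Lemma 3.1 / `lemContinousDifSemismooth`). -/
theorem stmt_7 (n : ℕ) (f : EuclideanSpace ℝ (Fin n) → EuclideanSpace ℝ (Fin n))
    (xb : EuclideanSpace ℝ (Fin n)) (ε δ : ℝ) (hε : 0 < ε) (hδ : 0 < δ)
    (hdiff : ∀ x ∈ closedBall xb δ, DifferentiableAt ℝ f x)
    (happrox : ∀ x ∈ closedBall xb δ,
      ‖f x - f xb - fderiv ℝ f x (x - xb)‖ ≤ ε * ‖x - xb‖) :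
    ∀ x ∈ closedBall xb δ, ∀ ys : EuclideanSpace ℝ (Fin n),
      |⟪(fderiv ℝ f x).adjoint ys, x - xb⟫ - ⟪ys, f x - f xb⟫| ≤
        ε * max ‖(fderiv ℝ f x).adjoint ys‖ ‖ys‖ * max ‖x - xb‖ ‖f x - f xb‖ := by
  intro x hx ys
  have h := happrox x hx
  rw [ContinuousLinearMap.adjoint_inner_left, ← inner_sub_right]
  calc _ ≤ ‖ys‖ * ‖fderiv ℝ f x (x - xb) - (f x - f xb)‖ := abs_real_inner_le_norm _ _
    _ ≤ ‖ys‖ * (ε * ‖x - xb‖) := by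
        rw [norm_sub_rev]
        gcongr
    _ = ε * ‖ys‖ * ‖x - xb‖ := by ring
    _ ≤ _ := by
        gcongr
        · exact le_max_right _ _
        · exact le_max_left _ _
end

section
/- Let n be a natural number, let K ⊆ EuclideanSpace ℝ (Fin n) be a compact set, let α > 0, and let f : EuclideanSpace ℝ (Fin n) → EuclideanSpace ℝ (Fin n) be continuously differentiable on an open set containing {y : dist(y, K) ≤ α}. Then for every ε > 0 there exists δ ∈ (0, α) such that for every ȳ ∈ K and every y ∈ closedBall(ȳ, δ) and every x* ∈ EuclideanSpace ℝ (Fin n), setting y* := (Df y)† x* (the Hilbert-space adjoint of the Fréchet derivative of f at y applied to x*), one has |⟨x*, f y − f ȳ⟩ − ⟨y*, y − ȳ⟩| ≤ ε · max{‖x*‖, ‖y*‖} · max{‖f y − f ȳ‖, ‖y − ȳ‖}. -/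
open Metric
open scoped RealInnerProductSpace

/-- Uniform semismooth*-type estimate along a compact set for a C¹ localization
(Proposition 3.6 / `proInverseSmooth`). -/
theorem stmt_8 (n : ℕ) (K : Set (EuclideanSpace ℝ (Fin n))) (hK : IsCompact K)
    (α : ℝ) (hα : 0 < α)
    (f : EuclideanSpace ℝ (Fin n) → EuclideanSpace ℝ (Fin n))
    (U : Set (EuclideanSpace ℝ (Fin n))) (hU : IsOpen U)
    (hKU : {y | infDist y K ≤ α} ⊆ U) (hf : ContDiffOn ℝ 1 f U) :
    ∀ ε > 0, ∃ δ, 0 < δ ∧ δ < α ∧ ∀ gb ∈ K, ∀ y ∈ closedBall gb δ,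
      ∀ xs : EuclideanSpace ℝ (Fin n),
        |⟪xs, f y - f gb⟫ - ⟪(fderiv ℝ f y).adjoint xs, y - gb⟫| ≤
          ε * max ‖xs‖ ‖(fderiv ℝ f y).adjoint xs‖ * max ‖f y - f gb‖ ‖y - gb‖ := by
  intro ε hε
  have hTU : cthickening α K ⊆ U := by
    intro y hy
    apply hKU
    have h := (mem_cthickening_iff).1 hy
    exact ENNReal.toReal_le_of_le_ofReal hα.le h
  have hcont : ContinuousOn (fderiv ℝ f) (cthickening α K) :=
    (hf.continuousOn_fderiv_of_isOpen hU le_rfl).mono hTU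
  have huc := (hK.cthickening (r := α)).uniformContinuousOn_of_continuous hcont
  obtain ⟨d, hd, H⟩ := Metric.uniformContinuousOn_iff.1 huc ε hε
  have hm : 0 < min (α / 2) (d / 3) := by positivity
  have hm1 := min_le_left (α / 2) (d / 3)
  have hm2 := min_le_right (α / 2) (d / 3)
  refine ⟨min (α / 2) (d / 3), hm, by linarith, ?_⟩
  generalize min (α / 2) (d / 3) = δ at *
  intro g hg y hy xs
  have hsub : closedBall g δ ⊆ cthickening α K :=
    (closedBall_subset_closedBall (by linarith)).trans
      (closedBall_subset_cthickening hg α)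
  have key : ‖f y - f g - fderiv ℝ f y (y - g)‖ ≤ ε * ‖y - g‖ := by
    refine (convex_closedBall g δ).norm_image_sub_le_of_norm_fderiv_le' (𝕜 := ℝ)
      (fun z hz => ?_) (fun z hz => ?_) (mem_closedBall_self hm.le) hy
    · exact (hf.differentiableOn one_ne_zero).differentiableAt
        (hU.mem_nhds (hTU (hsub hz)))
    · rw [← dist_eq_norm]
      refine (H z (hsub hz) y (hsub hy) ?_).le
      have h1 := mem_closedBall.1 hz
      have h2 := mem_closedBall.1 hy
      have h3 := dist_triangle_right z y g
      linarith
  rw [ContinuousLinearMap.adjoint_inner_left, ← inner_sub_right]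
  calc _ ≤ ‖xs‖ * ‖f y - f g - fderiv ℝ f y (y - g)‖ := abs_real_inner_le_norm _ _
    _ ≤ ‖xs‖ * (ε * ‖y - g‖) := by gcongr
    _ = ε * ‖xs‖ * ‖y - g‖ := by ring
    _ ≤ _ := by
      gcongr
      · exact le_max_left _ _
      · exact le_max_right _ _
end

section
/- Let n be a natural number and let F : EuclideanSpace ℝ (Fin n) → Set (EuclideanSpace ℝ (Fin n)) be a set-valued mapping whose graph gph F is closed and convex. For (x, y) ∈ gph F define N(x, y) := {(x*, y*) : ⟨x*, u − x⟩ − ⟨y*, z − y⟩ ≤ 0 for all (u, z) ∈ gph F}. Let W ⊆ gph F and δ > 0 be such that for every (x, y) ∈ gph F for which there exists (w₁, w₂) ∈ W with max{‖x − w₁‖, ‖y − w₂‖} ≤ δ, membership (x*, y*) ∈ N(x, y) implies (−x*, −y*) ∈ N(x, y). Then for every ε > 0, every (x̄, ȳ) ∈ W, every (x, y) ∈ gph F with ‖x − x̄‖ ≤ δ and ‖y − ȳ‖ ≤ δ, and every (x*, y*) ∈ N(x, y), one has |⟨x*, x − x̄⟩ − ⟨y*, y − ȳ⟩| ≤ ε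 · max{‖x*‖, ‖y*‖} · max{‖x − x̄‖, ‖y − ȳ‖}. -/
open Metric
open scoped RealInnerProductSpace

/-- A mapping with closed convex graph whose coderivative graph is symmetric near `W` is
uniformly semismooth* on `W` (Theorem 3.8). -/
theorem stmt_10 (n : ℕ)
    (F : EuclideanSpace ℝ (Fin n) → Set (EuclideanSpace ℝ (Fin n)))
    (hclosed : IsClosed {p : EuclideanSpace ℝ (Fin n) × EuclideanSpace ℝ (Fin n) | p.2 ∈ F p.1})
    (hconvex : Convex ℝ {p : EuclideanSpace ℝ (Fin n) × EuclideanSpace ℝ (Fin n) | p.2 ∈ F p.1})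
    (N : EuclideanSpace ℝ (Fin n) → EuclideanSpace ℝ (Fin n) →
      Set (EuclideanSpace ℝ (Fin n) × EuclideanSpace ℝ (Fin n)))
    (hN : ∀ x y, N x y =
      {q | ∀ u z, z ∈ F u → ⟪q.1, u - x⟫ - ⟪q.2, z - y⟫ ≤ 0})
    (W : Set (EuclideanSpace ℝ (Fin n) × EuclideanSpace ℝ (Fin n)))
    (hW : W ⊆ {p | p.2 ∈ F p.1}) (δ : ℝ) (hδ : 0 < δ)
    (hsym : ∀ x y, y ∈ F x → (∃ w ∈ W, max ‖x - w.1‖ ‖y - w.2‖ ≤ δ) →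
      ∀ q ∈ N x y, (-q.1, -q.2) ∈ N x y) :
    ∀ ε > 0, ∀ w ∈ W, ∀ x y, y ∈ F x → ‖x - w.1‖ ≤ δ → ‖y - w.2‖ ≤ δ →
      ∀ q ∈ N x y,
        |⟪q.1, x - w.1⟫ - ⟪q.2, y - w.2⟫| ≤
          ε * max ‖q.1‖ ‖q.2‖ * max ‖x - w.1‖ ‖y - w.2‖ := by
  intro ε hε w hw x y hy hx1 hy1 q hq
  have h2 := hsym x y hy ⟨w, hw, max_le hx1 hy1⟩ q hq
  rw [hN] at hq h2
  have a := hq w.1 w.2 (hW hw)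
  have b := h2 w.1 w.2 (hW hw)
  simp only [inner_neg_left] at b
  have c : ⟪q.1, x - w.1⟫ - ⟪q.2, y - w.2⟫ = 0 := by
    rw [← neg_sub w.1 x, ← neg_sub w.2 y, inner_neg_right, inner_neg_right]
    linarith
  rw [c, abs_zero]
  positivity
end

section
/- Let n be a natural number, let T > 0, let f : ℝ × EuclideanSpace ℝ (Fin n) → EuclideanSpace ℝ (Fin n) be continuously differentiable, and let x : [0, T] → EuclideanSpace ℝ (Fin n) be continuous. Then for every ε > 0 there exist ε̂ > 0 and δ > 0 such that for every t ∈ [0, T], every x ∈ closedBall(x(t), δ), every y ∈ closedBall(0, δ), and all w*, y* ∈ EuclideanSpace ℝ (Fin n) satisfying |⟨w*, x − x(t)⟩ − ⟨y*, (y − f(t, x)) + f(t, x(t))⟩| ≤ ε̂ · max{‖w*‖, ‖y*‖} · max{‖x − x(t)‖, ‖(y − f(t, x)) + f(t, x(t))‖}, the vector x* := w* + (D_x f(t, x))† y* satisfies |⟨x*, x − x(t)⟩ − ⟨y*, y⟩| ≤ ε · max{‖x*‖, ‖y*‖} · max{‖x − x(t)‖, ‖y‖}, where D_x f(t, x) is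 the partial Fréchet derivative of f with respect to the second variable and † denotes the Hilbert-space adjoint. -/
open Metric
open scoped RealInnerProductSpace

lemma aux_unif (n : ℕ) (T : ℝ)
    (f : ℝ × EuclideanSpace ℝ (Fin n) → EuclideanSpace ℝ (Fin n))
    (hf : ContDiff ℝ 1 f)
    (x : ℝ → EuclideanSpace ℝ (Fin n)) (hx : ContinuousOn x (Set.Icc 0 T)) (ε : ℝ) (hε : 0 < ε) :
    ∃ L ≥ 0, ∃ δ > 0, ∀ t ∈ Set.Icc (0 : ℝ) T, ∀ u ∈ closedBall (x t) δ,
      ‖fderiv ℝ (fun z => f (t, z)) u‖ ≤ L ∧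
      ‖(fderiv ℝ (fun z => f (t, z)) u) (u - x t) - (f (t, u) - f (t, x t))‖ ≤ ε * ‖u - x t‖ := by
  have hd : ∀ t z, HasFDerivAt (fun z => f (t, z))
      ((fderiv ℝ f (t, z)).comp (ContinuousLinearMap.inr ℝ ℝ (EuclideanSpace ℝ (Fin n)))) z := by
    intro t z
    exact ((hf.differentiable one_ne_zero (t, z)).hasFDerivAt).comp z (hasFDerivAt_prodMk_right t z)
  let G : ℝ × EuclideanSpace ℝ (Fin n) → (EuclideanSpace ℝ (Fin n) →L[ℝ] EuclideanSpace ℝ (Fin n)) :=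
    fun p => (fderiv ℝ f (p.1, x p.1 + p.2)).comp
      (ContinuousLinearMap.inr ℝ ℝ (EuclideanSpace ℝ (Fin n)))
  have hGd : ∀ t z, fderiv ℝ (fun z => f (t, z)) z = G (t, z - x t) := by
    intro t z
    rw [(hd t z).fderiv]
    simp [G]
  let K : Set (ℝ × EuclideanSpace ℝ (Fin n)) := Set.Icc 0 T ×ˢ closedBall 0 1
  have hK : IsCompact K := isCompact_Icc.prod (isCompact_closedBall _ _)
  have hGc : ContinuousOn G K := by
    have h1 : ContinuousOn (fun p : ℝ × EuclideanSpace ℝ (Fin n) => (p.1, x p.1 + p.2)) K := by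
      refine continuousOn_fst.prodMk (ContinuousOn.add ?_ continuousOn_snd)
      exact hx.comp continuousOn_fst (fun p hp => hp.1)
    have h2 := (hf.continuous_fderiv one_ne_zero).comp_continuousOn h1
    exact h2.clm_comp continuousOn_const
  obtain ⟨L, hL⟩ := hK.exists_bound_of_continuousOn hGc
  have hu := hK.uniformContinuousOn_of_continuous hGc
  rw [Metric.uniformContinuousOn_iff] at hu
  obtain ⟨d, hd0, hdd⟩ := hu ε hε
  refine ⟨max L 0, le_max_right _ _, min 1 (d / 3), by positivity, ?_⟩
  intro t ht u hub
  have hmem : ∀ z ∈ closedBall (x t) (min 1 (d/3)), (t, z - x t) ∈ K := by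
    intro z hz
    refine ⟨ht, ?_⟩
    rw [mem_closedBall, dist_eq_norm] at hz
    simpa using hz.trans (min_le_left _ _)
  refine ⟨?_, ?_⟩
  · rw [hGd]
    exact (hL _ (hmem u hub)).trans (le_max_left _ _)
  · have key := (convex_closedBall (x t) (min 1 (d/3))).norm_image_sub_le_of_norm_hasFDerivWithin_le'
      (f := fun z => f (t, z)) (f' := fun z => G (t, z - x t)) (φ := G (t, u - x t)) (C := ε)
      (x := x t) (y := u)
      (fun z _ => by
        rw [← hGd]
        exact (hd t z).differentiableAt.hasFDerivAt.hasFDerivWithinAt)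
      (fun z hz => by
        rw [← dist_eq_norm]
        refine (hdd _ (hmem z hz) _ (hmem u hub) ?_).le
        have h1 : dist z u ≤ d/3 + d/3 := by
          refine (dist_triangle_right z u (x t)).trans (add_le_add ?_ ?_)
          · exact (mem_closedBall.1 hz).trans (min_le_right _ _)
          · exact (mem_closedBall.1 hub).trans (min_le_right _ _)
        have h2 : dist (t, z - x t) (t, u - x t) = dist z u := by
          simp [Prod.dist_eq]
        rw [h2]; linarith)
      (mem_closedBall_self (by positivity)) hub
    rw [hGd, norm_sub_rev]
    exact key

/-- Stability of uniform semismoothness* under continuously differentiable perturbation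
along a continuous path (Theorem 3.9), in coderivative-pair form. -/
theorem stmt_11 (n : ℕ) (T : ℝ) (hT : 0 < T)
    (f : ℝ × EuclideanSpace ℝ (Fin n) → EuclideanSpace ℝ (Fin n))
    (hf : ContDiff ℝ 1 f)
    (x : ℝ → EuclideanSpace ℝ (Fin n)) (hx : ContinuousOn x (Set.Icc 0 T)) :
    ∀ ε > 0, ∃ εh > 0, ∃ δ > 0, ∀ t ∈ Set.Icc (0 : ℝ) T,
      ∀ u ∈ closedBall (x t) δ, ∀ y ∈ closedBall (0 : EuclideanSpace ℝ (Fin n)) δ,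
        ∀ ws ys : EuclideanSpace ℝ (Fin n),
          |⟪ws, u - x t⟫ - ⟪ys, (y - f (t, u)) + f (t, x t)⟫| ≤
            εh * max ‖ws‖ ‖ys‖ * max ‖u - x t‖ ‖(y - f (t, u)) + f (t, x t)‖ →
          |⟪ws + (fderiv ℝ (fun z => f (t, z)) u).adjoint ys, u - x t⟫ - ⟪ys, y⟫| ≤
            ε * max ‖ws + (fderiv ℝ (fun z => f (t, z)) u).adjoint ys‖ ‖ys‖ *
              max ‖u - x t‖ ‖y‖ := by
  intro ε hε
  obtain ⟨L, hL0, δ, hδ, H⟩ := aux_unif n T f hf x hx (ε / 2) (by positivity)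
  have hM : 0 < 1 + L + ε / 2 := by positivity
  refine ⟨ε / 2 / ((1 + L + ε / 2) * (1 + L + ε / 2)), by positivity, δ, hδ, ?_⟩
  intro t ht u hu y _ ws ys h
  obtain ⟨hA, hr⟩ := H t ht u hu
  generalize fderiv ℝ (fun z => f (t, z)) u = A at *
  set p := u - x t
  set v := (y - f (t, u)) + f (t, x t) with hv
  set q := A p - (f (t, u) - f (t, x t)) with hq
  set X := ws + A.adjoint ys with hX
  set M := 1 + L + ε / 2 with hMdef
  have e1 : ⟪X, p⟫ - ⟪ys, y⟫ = (⟪ws, p⟫ - ⟪ys, v⟫) + ⟪ys, q⟫ := by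
    have : y = v + (A p - q) := by rw [hv, hq]; abel
    rw [hX, inner_add_left, ContinuousLinearMap.adjoint_inner_left]
    have h2 : ⟪ys, y⟫ = ⟪ys, v⟫ + (⟪ys, A p⟫ - ⟪ys, q⟫) := by
      rw [← inner_sub_right, ← inner_add_right, ← this]
    rw [h2]; ring
  set a := max ‖X‖ ‖ys‖
  set b := max ‖p‖ ‖y‖
  have ha1 : ‖X‖ ≤ a := le_max_left _ _
  have ha2 : ‖ys‖ ≤ a := le_max_right _ _
  have hb1 : ‖p‖ ≤ b := le_max_left _ _
  have hb2 : ‖y‖ ≤ b := le_max_right _ _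
  have ha : 0 ≤ a := (norm_nonneg _).trans ha1
  have hb : 0 ≤ b := (norm_nonneg _).trans hb1
  have hLa := mul_nonneg hL0 ha
  have hLb := mul_nonneg hL0 hb
  have hea := mul_nonneg hε.le ha
  have heb := mul_nonneg hε.le hb
  have hws : ‖ws‖ ≤ M * a := by
    have : ws = X - A.adjoint ys := by rw [hX]; abel
    have h1 : ‖ws‖ ≤ ‖X‖ + ‖A.adjoint ys‖ := by rw [this]; exact norm_sub_le _ _
    have h2 : ‖A.adjoint ys‖ ≤ L * a := by
      refine (ContinuousLinearMap.le_opNorm _ _).trans ?_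
      rw [LinearIsometryEquiv.norm_map]
      gcongr
    rw [hMdef]; linarith
  have hvM : ‖v‖ ≤ M * b := by
    have : v = y - A p + q := by rw [hv, hq]; abel
    have h1 : ‖v‖ ≤ ‖y‖ + ‖A p‖ + ‖q‖ := by
      rw [this]; exact (norm_add_le _ _).trans (by gcongr; exact norm_sub_le _ _)
    have h2 : ‖A p‖ ≤ L * b := (A.le_opNorm _).trans (by gcongr)
    have h3 : ‖q‖ ≤ ε / 2 * b := hr.trans (by gcongr)
    rw [hMdef]; linarith
  have m1 : max ‖ws‖ ‖ys‖ ≤ M * a := max_le hws (by rw [hMdef]; linarith)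
  have m2 : max ‖p‖ ‖v‖ ≤ M * b := max_le (by rw [hMdef]; linarith) hvM
  have i1 : |⟪ys, q⟫| ≤ a * (ε / 2 * b) :=
    (abs_real_inner_le_norm _ _).trans
      (mul_le_mul ha2 (hr.trans (by gcongr)) (norm_nonneg _) ha)
  have i2 : |⟪ws, p⟫ - ⟪ys, v⟫| ≤ ε / 2 / (M * M) * (M * a) * (M * b) :=
    h.trans (by gcongr)
  have i3 : ε / 2 / (M * M) * (M * a) * (M * b) = ε / 2 * a * b := by
    field_simp
  rw [e1]
  refine (abs_add_le _ _).trans ?_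
  rw [i3] at i2
  linarith
end

section
/- Let n be a positive natural number, let A, B : Matrix (Fin n) (Fin n) ℝ with A invertible, let u, x̄, y ∈ EuclideanSpace ℝ (Fin n), let ε ≥ 0, and set M := max{‖u − x̄‖, ‖y‖}. Assume that for each index i one has |(A.mulVec (u − x̄) − B.mulVec y) i| ≤ ε · sqrt(∑_j (A i j)² + ∑_j (B i j)²) · M. Then ‖u − A⁻¹.mulVec (B.mulVec y) − x̄‖ ≤ ε · ‖A⁻¹‖ · ‖(A | B)‖_F · M, where ‖A⁻¹‖ is the operator norm of A⁻¹ acting on EuclideanSpace ℝ (Fin n) and ‖(A | B)‖_F := sqrt(∑_{i,j} (A i j)² + ∑_{i,j} (B i j)²) is the Frobenius norm of the horizontal concatenation of A and B. -/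
open Metric

/-- Linear-algebraic core of the Newton-step estimate (Lemma 5.1 / `lemMatrices`). -/
theorem stmt_12 (n : ℕ) (hn : 0 < n) (A B : Matrix (Fin n) (Fin n) ℝ)
    (hA : IsUnit A.det)
    (u xb y : EuclideanSpace ℝ (Fin n)) (ε : ℝ) (hε : 0 ≤ ε)
    (M : ℝ) (hM : M = max ‖u - xb‖ ‖y‖)
    (hrow : ∀ i, |(A.mulVec (u - xb) - B.mulVec y) i| ≤
      ε * Real.sqrt ((∑ j, (A i j) ^ 2) + (∑ j, (B i j) ^ 2)) * M) :
    ‖u - (WithLp.equiv 2 (Fin n → ℝ)).symm (A⁻¹.mulVec (B.mulVec y)) - xb‖ ≤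
      ε * ‖Matrix.toEuclideanCLM (𝕜 := ℝ) A⁻¹‖ *
        Real.sqrt ((∑ i, ∑ j, (A i j) ^ 2) + (∑ i, ∑ j, (B i j) ^ 2)) * M := by
  have hM0 : 0 ≤ M := hM ▸ le_max_of_le_right (norm_nonneg y)
  set r : EuclideanSpace ℝ (Fin n) :=
    WithLp.toLp 2 (A.mulVec (u - xb) - B.mulVec y) with hr
  have key : u - (WithLp.equiv 2 (Fin n → ℝ)).symm (A⁻¹.mulVec (B.mulVec y)) - xb
      = Matrix.toEuclideanCLM (𝕜 := ℝ) A⁻¹ r := by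
    rw [hr, Matrix.toEuclideanCLM_toLp, Matrix.mulVec_sub, Matrix.mulVec_mulVec _ A⁻¹ A,
      Matrix.nonsing_inv_mul A hA, Matrix.one_mulVec]
    ext i
    simp
    ring
  have hnr : ‖r‖ ≤ ε * Real.sqrt ((∑ i, ∑ j, (A i j) ^ 2) + (∑ i, ∑ j, (B i j) ^ 2)) * M := by
    rw [EuclideanSpace.norm_eq]
    apply Real.sqrt_le_iff.2
    refine ⟨by positivity, ?_⟩
    rw [mul_pow, mul_pow, Real.sq_sqrt (by positivity), ← Finset.sum_add_distrib,
      Finset.mul_sum, Finset.sum_mul]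
    refine Finset.sum_le_sum fun i _ => ?_
    have h := pow_le_pow_left₀ (abs_nonneg _) (hrow i) 2
    rw [mul_pow, mul_pow, Real.sq_sqrt (by positivity)] at h
    exact h
  rw [key]
  calc _ ≤ ‖Matrix.toEuclideanCLM (𝕜 := ℝ) A⁻¹‖ * ‖r‖ := ContinuousLinearMap.le_opNorm _ _
    _ ≤ _ := mul_le_mul_of_nonneg_left hnr (norm_nonneg _)
    _ = _ := by ring
end

section
/- Let n be a natural number, let λ > 0, δ > 0, ℓ_g ≥ 0, ℓ_s ≥ 0, let F : EuclideanSpace ℝ (Fin n) → Set (EuclideanSpace ℝ (Fin n)) be a set-valued mapping, let g : EuclideanSpace ℝ (Fin n) → EuclideanSpace ℝ (Fin n), let q, x̄ ∈ EuclideanSpace ℝ (Fin n), and let s : EuclideanSpace ℝ (Fin n) → EuclideanSpace ℝ (Fin n). Set w̄ := x̄ − λ·g(x̄) + λ·q. Assume: g is Lipschitz with constant ℓ_g on closedBall(x̄, δ); s(w̄) = x̄; s is Lipschitz with constant ℓ_s on closedBall(w̄, (1 + λℓ_g)δ); and s is a selection of (I + λF)⁻¹ on that ball, i.e. for every w ∈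 closedBall(w̄, (1 + λℓ_g)δ) one has (w − s(w))/λ ∈ F(s(w)). Then there exists η > 0 such that for every x ∈ closedBall(x̄, δ), setting d̂ := s(x − λ·g(x) + λ·q), one has: (a) (1/λ)(x − d̂) − g(x) + q ∈ F(d̂); and (b) max{‖x − x̄‖, ‖d̂ − x̄‖, (1/λ)‖x − d̂‖, ‖x − d̂‖} ≤ η‖x − x̄‖. -/
open Metric

/-- The approximation step via a Lipschitz selection of the resolvent
(Proposition 7.1 / `propApprox`). -/
theorem stmt_13 (n : ℕ) (lam δ ℓg ℓs : ℝ) (hlam : 0 < lam) (hδ : 0 < δ)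
    (hℓg : 0 ≤ ℓg) (hℓs : 0 ≤ ℓs)
    (F : EuclideanSpace ℝ (Fin n) → Set (EuclideanSpace ℝ (Fin n)))
    (g : EuclideanSpace ℝ (Fin n) → EuclideanSpace ℝ (Fin n))
    (q xb : EuclideanSpace ℝ (Fin n))
    (s : EuclideanSpace ℝ (Fin n) → EuclideanSpace ℝ (Fin n))
    (wb : EuclideanSpace ℝ (Fin n)) (hwb : wb = xb - lam • g xb + lam • q)
    (hg : ∀ x ∈ closedBall xb δ, ∀ u ∈ closedBall xb δ, ‖g x - g u‖ ≤ ℓg * ‖x - u‖)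
    (hswb : s wb = xb)
    (hs : ∀ w ∈ closedBall wb ((1 + lam * ℓg) * δ),
      ∀ w' ∈ closedBall wb ((1 + lam * ℓg) * δ), ‖s w - s w'‖ ≤ ℓs * ‖w - w'‖)
    (hsel : ∀ w ∈ closedBall wb ((1 + lam * ℓg) * δ), (1 / lam) • (w - s w) ∈ F (s w)) :
    ∃ η > 0, ∀ x ∈ closedBall xb δ,
      ((1 / lam) • (x - s (x - lam • g x + lam • q)) - g x + q
          ∈ F (s (x - lam • g x + lam • q))) ∧
      max (max ‖x - xb‖ ‖s (x - lam • g x + lam • q) - xb‖)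
          (max ((1 / lam) * ‖x - s (x - lam • g x + lam • q)‖)
            ‖x - s (x - lam • g x + lam • q)‖) ≤ η * ‖x - xb‖ := by
  have ha : 0 < 1 / lam := by positivity
  have hK : 0 ≤ ℓs * (1 + lam * ℓg) := by positivity
  refine ⟨(1 + 1 / lam) * (1 + ℓs * (1 + lam * ℓg)), by positivity, fun x hx => ?_⟩
  have hxb : xb ∈ closedBall xb δ := mem_closedBall_self hδ.le
  have hxn : ‖x - xb‖ ≤ δ := by rwa [mem_closedBall, dist_eq_norm] at hx
  set w := x - lam • g x + lam • q with hw
  have hww : ‖w - wb‖ ≤ (1 + lam * ℓg) * ‖x - xb‖ := by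
    have e : w - wb = (x - xb) - lam • (g x - g xb) := by
      rw [hw, hwb, smul_sub]; abel
    have h1 := norm_sub_le (x - xb) (lam • (g x - g xb))
    rw [norm_smul, Real.norm_of_nonneg hlam.le] at h1
    have h2 := mul_le_mul_of_nonneg_left (hg x hx xb hxb) hlam.le
    rw [e]
    linarith
  have hwmem : w ∈ closedBall wb ((1 + lam * ℓg) * δ) := by
    rw [mem_closedBall, dist_eq_norm]
    exact hww.trans (mul_le_mul_of_nonneg_left hxn (by positivity))
  have hwbmem : wb ∈ closedBall wb ((1 + lam * ℓg) * δ) :=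
    mem_closedBall_self (by positivity)
  constructor
  · have h := hsel w hwmem
    have e : (1 / lam) • (x - s w) - g x + q = (1 / lam) • (w - s w) := by
      have e2 : w - s w = (x - s w) - lam • (g x - q) := by
        rw [hw, smul_sub]; abel
      rw [e2, smul_sub (1 / lam) (x - s w) (lam • (g x - q)), smul_smul, one_div_mul_cancel hlam.ne', one_smul]
      abel
    rw [e]; exact h
  · have hd : ‖s w - xb‖ ≤ ℓs * (1 + lam * ℓg) * ‖x - xb‖ := by
      have h := hs w hwmem wb hwbmem
      rw [hswb] at h
      have := mul_le_mul_of_nonneg_left hww hℓs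
      linarith
    have hxs : ‖x - s w‖ ≤ (1 + ℓs * (1 + lam * ℓg)) * ‖x - xb‖ := by
      have h := norm_sub_le (x - xb) (s w - xb)
      rw [sub_sub_sub_cancel_right] at h
      linarith
    have hN := norm_nonneg (x - xb)
    generalize ℓs * (1 + lam * ℓg) = K at *
    generalize 1 / lam = a at *
    have hKN : 0 ≤ K * ‖x - xb‖ := by positivity
    have haN : 0 ≤ a * ((1 + K) * ‖x - xb‖) := by positivity
    have hax := mul_le_mul_of_nonneg_left hxs ha.le
    refine max_le (max_le ?_ ?_) (max_le ?_ ?_) <;> linarith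
end
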